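/- arXiv:1405.5652 — 2 statements merged into one kernel-verified Lean document; each statement's English description precedes it below -/
import Mathlib

section
/- In the generalized quaternion algebra H(γ₁,γ₂) with γ₁,γ₂ > 0, every polynomial function of the form f(x) = a₀xa₁x⋯a_{n-1}xa_n + φ(x), where a₀,…,a_n are nonzero elements of H(γ₁,γ₂) and φ(x) is a finite sum of monomials b₀xb₁x⋯b_{t-1}xb_t of degree t < n, has at least one root in H(γ₁,γ₂). -/
open Quaternion

/-- The value at `x` of the monomial `b₀ x b₁ x ⋯ b_{t-1} x b_t` of degree `t` with
coefficients `b : Fin (t+1) → ℍ[ℝ, c₁, c₂]`. -/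
def monval {c₁ c₂ : ℝ} : (t : ℕ) → (Fin (t + 1) → ℍ[ℝ, c₁, c₂]) → ℍ[ℝ, c₁, c₂] → ℍ[ℝ, c₁, c₂]
  | 0, b, _ => b 0
  | t + 1, b, x => b 0 * x * monval t (fun i => b i.succ) x

section

section NullLagrangian
open MeasureTheory Set Metric

variable {E : Type*} [NormedAddCommGroup E] [NormedSpace ℝ E] [FiniteDimensional ℝ E]

lemma en_lagrange (v : ℕ → ℝ) (hv : Function.Injective v) (A : E →L[ℝ] E) :
    A.det = ∑ k ∈ Finset.range (Module.finrank ℝ E + 1),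
      (v k • ContinuousLinearMap.id ℝ E + A).det *
        (Lagrange.basis (Finset.range (Module.finrank ℝ E + 1)) v k).eval 0 := by
  set p := (-(A : E →ₗ[ℝ] E)).charpoly with hp
  have hd : p.degree < (Finset.range (Module.finrank ℝ E + 1)).card := by
    rw [hp, Polynomial.degree_eq_natDegree (LinearMap.charpoly_monic _).ne_zero,
      LinearMap.charpoly_natDegree, Finset.card_range]
    exact_mod_cast Nat.lt_succ_self _
  have hev : ∀ t : ℝ, p.eval t = (t • ContinuousLinearMap.id ℝ E + A).det := by
    intro t
    rw [hp, LinearMap.eval_charpoly, ContinuousLinearMap.det]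
    congr 1
    ext x
    simp [Algebra.algebraMap_eq_smul_one]
  have h := Lagrange.eq_interpolate (v := v) hv.injOn hd
  have h0 := congrArg (Polynomial.eval 0) h
  rw [hev, Lagrange.interpolate_apply, Polynomial.eval_finsetSum] at h0
  simp only [Polynomial.eval_mul, Polynomial.eval_C, hev] at h0
  simpa using h0

lemma en_det_pos (K : ℝ) : ∃ T : ℝ, 0 < T ∧ ∀ t, T ≤ t → ∀ A : E →L[ℝ] E, ‖A‖ ≤ K →
    0 < (t • ContinuousLinearMap.id ℝ E + A).det := by
  have hc : Continuous fun A : E →L[ℝ] E => A.det := ContinuousLinearMap.continuous_det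
  have h1 : (ContinuousLinearMap.id ℝ E).det = 1 := by
    simp [ContinuousLinearMap.det]
  have : ∀ᶠ A in nhds (ContinuousLinearMap.id ℝ E), 0 < A.det := by
    apply hc.continuousAt.eventually_const_lt
    show 0 < (ContinuousLinearMap.id ℝ E).det
    rw [h1]; exact one_pos
  obtain ⟨δ, hδ, hb⟩ := Metric.eventually_nhds_iff.1 this
  refine ⟨(|K| + 1) / δ, by positivity, fun t ht A hA => ?_⟩
  have ht0 : 0 < t := lt_of_lt_of_le (by positivity) ht
  have e : t • ContinuousLinearMap.id ℝ E + A = t • (ContinuousLinearMap.id ℝ E + t⁻¹ • A) := by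
    rw [smul_add, smul_smul, mul_inv_cancel₀ ht0.ne', one_smul]
  have : 0 < (ContinuousLinearMap.id ℝ E + t⁻¹ • A).det := by
    apply hb
    rw [dist_eq_norm, add_sub_cancel_left, norm_smul, norm_inv, Real.norm_of_nonneg ht0.le,
      inv_mul_lt_iff₀ ht0]
    rw [div_le_iff₀ hδ] at ht
    have := le_abs_self K
    linarith
  rw [e, ContinuousLinearMap.det, ContinuousLinearMap.toLinearMap_smul, LinearMap.det_smul]
  exact mul_pos (pow_pos ht0 _) this

variable [MeasurableSpace E] [BorelSpace E] (μ : Measure E) [μ.IsAddHaarMeasure]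

lemma en_null_aux (f g : E → E) (hf : ContDiff ℝ 1 f) (hg : ContDiff ℝ 1 g)
    (cf : HasCompactSupport f) (cg : HasCompactSupport g) (R : ℝ)
    (hfg : ∀ x, R < ‖x‖ → f x = g x) :
    ∫ x in closedBall 0 R, (fderiv ℝ f x).det ∂μ = ∫ x in closedBall 0 R, (fderiv ℝ g x).det ∂μ := by
  obtain ⟨Cf, lf⟩ := hf.lipschitzWith_of_hasCompactSupport cf (by simp)
  obtain ⟨Cg, lg⟩ := hg.lipschitzWith_of_hasCompactSupport cg (by simp)
  -- bijectivity
  have bij : ∀ (h : E → E) (C : NNReal), LipschitzWith C h → ∀ t : ℝ, (C : ℝ) < t →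
      Function.Bijective (fun x => t • x + h x) := by
    intro h C lh t ht
    have ht0 : t ≠ 0 := (lt_of_le_of_lt C.2 ht).ne'
    have ht1 : 0 < t := (lt_of_le_of_lt C.2 ht)
    let e : E ≃L[ℝ] E := ContinuousLinearEquiv.smulLeft (Units.mk0 t ht0)
    have he : ∀ x, e x = t • x := fun x => rfl
    have hs : ∀ x, e.symm x = t⁻¹ • x := fun x => by
      apply e.injective; rw [e.apply_symm_apply, he, smul_smul, mul_inv_cancel₀ ht0, one_smul]
    have ha : ApproximatesLinearOn (fun x => t • x + h x) (e : E →L[ℝ] E) univ C := by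
      intro x _ y _
      have := lh.dist_le_mul x y
      rw [dist_eq_norm, dist_eq_norm] at this
      have e1 : (t • x + h x) - (t • y + h y) - (e : E →L[ℝ] E) (x - y) = h x - h y := by
        rw [ContinuousLinearEquiv.coe_coe, he, smul_sub]; abel
      show ‖(t • x + h x) - (t • y + h y) - (e : E →L[ℝ] E) (x - y)‖ ≤ _
      rw [e1]; exact this
    have hc : Subsingleton E ∨ C < ‖(e.symm : E →L[ℝ] E)‖₊⁻¹ := by
      rcases subsingleton_or_nontrivial E with h | h
      · exact Or.inl h
      · right
        have hn : 0 < ‖(e.symm : E →L[ℝ] E)‖ := e.norm_symm_pos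
        have : ‖(e.symm : E →L[ℝ] E)‖ ≤ t⁻¹ := by
          apply ContinuousLinearMap.opNorm_le_bound _ (by positivity)
          intro x
          rw [ContinuousLinearEquiv.coe_coe, hs, norm_smul, Real.norm_of_nonneg (by positivity)]
        rw [← NNReal.coe_lt_coe]
        push_cast
        exact lt_of_lt_of_le ht ((le_inv_comm₀ ht1 hn).2 this)
    exact ⟨injOn_univ.1 (ha.injOn hc), ha.surjective hc⟩
  have key : ∃ T : ℝ, ∀ t, T ≤ t →
    ∫ x in closedBall 0 R, (t • ContinuousLinearMap.id ℝ E + fderiv ℝ f x).det ∂μ =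
      ∫ x in closedBall 0 R, (t • ContinuousLinearMap.id ℝ E + fderiv ℝ g x).det ∂μ := by
    obtain ⟨Tf, _, hTf⟩ := en_det_pos (E := E) Cf
    obtain ⟨Tg, _, hTg⟩ := en_det_pos (E := E) Cg
    refine ⟨max (max Tf Tg) (max (Cf + 1) (Cg + 1)), fun t ht => ?_⟩
    simp only [max_le_iff] at ht
    obtain ⟨⟨h1, h2⟩, h3, h4⟩ := ht
    have main : ∀ (h : E → E) (C : NNReal), ContDiff ℝ 1 h → LipschitzWith C h → (C : ℝ) + 1 ≤ t →
        (∀ A : E →L[ℝ] E, ‖A‖ ≤ C → 0 < (t • ContinuousLinearMap.id ℝ E + A).det) →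
        ∫ x in closedBall 0 R, (t • ContinuousLinearMap.id ℝ E + fderiv ℝ h x).det ∂μ =
          ∫ x in (fun x => t • x + h x) '' closedBall 0 R, (1 : ℝ) ∂μ := by
      intro h C ch lh hC hp
      rw [integral_image_eq_integral_abs_det_fderiv_smul μ measurableSet_closedBall
        (f' := fun x => t • ContinuousLinearMap.id ℝ E + fderiv ℝ h x)]
      · congr 1
        ext x
        rw [abs_of_pos (hp _ (norm_fderiv_le_of_lipschitz ℝ lh)), smul_eq_mul, mul_one]
      · intro x _
        exact (((hasFDerivAt_id x).const_smul t).add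
          ((ch.differentiable (by simp)) x).hasFDerivAt).hasFDerivWithinAt
      · exact (bij h C lh t (by linarith)).1.injOn
    rw [main f Cf hf lf h3 (hTf t h1), main g Cg hg lg h4 (hTg t h2)]
    congr 2
    have bf := bij f Cf lf t (by linarith)
    have bg := bij g Cg lg t (by linarith)
    rw [← compl_inj_iff, ← image_compl_eq bf, ← image_compl_eq bg]
    apply image_congr
    intro x hx
    simp only [mem_compl_iff, mem_closedBall, dist_zero_right, not_le] at hx
    simp only [hfg x hx]
  obtain ⟨T, hT⟩ := key
  let v : ℕ → ℝ := fun k => T + k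
  have hv : Function.Injective v := fun a b h => by simpa [v] using h
  have int : ∀ h : E → E, ContDiff ℝ 1 h → ∀ t : ℝ, IntegrableOn
      (fun x => (t • ContinuousLinearMap.id ℝ E + fderiv ℝ h x).det) (closedBall 0 R) μ := by
    intro h ch t
    apply ContinuousOn.integrableOn_compact (isCompact_closedBall _ _)
    apply Continuous.continuousOn
    exact ContinuousLinearMap.continuous_det.comp
      (continuous_const.add (ch.continuous_fderiv (by simp)))
  simp_rw [en_lagrange v hv (fderiv ℝ f _), en_lagrange v hv (fderiv ℝ g _)]
  rw [integral_finsetSum, integral_finsetSum]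
  · apply Finset.sum_congr rfl
    intro k _
    rw [integral_mul_const, integral_mul_const, hT (v k) (by simp [v])]
  · intro k _; exact (int g hg _).mul_const _
  · intro k _; exact (int f hf _).mul_const _

lemma en_null (f g : E → E) (hf : ContDiff ℝ 1 f) (hg : ContDiff ℝ 1 g) (R : ℝ) (hR : 0 < R)
    (hfg : ∀ x, R < ‖x‖ → f x = g x) :
    ∫ x in closedBall 0 R, (fderiv ℝ f x).det ∂μ = ∫ x in closedBall 0 R, (fderiv ℝ g x).det ∂μ := by
  let χ : ContDiffBump (0 : E) := ⟨R + 1, R + 2, by linarith, by linarith⟩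
  have hχ : ContDiff ℝ 1 χ := χ.contDiff
  have hχ1 : ∀ x ∈ closedBall (0:E) R, ∀ h : E → E,
      fderiv ℝ (fun x => χ x • h x) x = fderiv ℝ h x := by
    intro x hx h
    apply Filter.EventuallyEq.fderiv_eq
    have : ball (0:E) (R+1) ∈ nhds x := isOpen_ball.mem_nhds (by
      simp at hx ⊢; linarith)
    filter_upwards [this] with y hy
    rw [χ.one_of_mem_closedBall (ball_subset_closedBall hy), one_smul]
  have := en_null_aux μ (fun x => χ x • f x) (fun x => χ x • g x) (hχ.smul hf) (hχ.smul hg)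
    (χ.hasCompactSupport.smul_right) (χ.hasCompactSupport.smul_right) R
    (fun x hx => by simp only [hfg x hx])
  have hh : ∀ h : E → E, ∫ x in closedBall 0 R, (fderiv ℝ (fun x => χ x • h x) x).det ∂μ =
      ∫ x in closedBall 0 R, (fderiv ℝ h x).det ∂μ := fun h =>
    setIntegral_congr_fun measurableSet_closedBall (fun x hx => by simp only [hχ1 x hx h])
  rw [hh, hh] at this
  exact this

end NullLagrangian

lemma en_psi : ∃ ψ : ℝ → ℝ, ContDiff ℝ 1 ψ ∧
    (∀ t, 1 < t → ψ t ^ 3 * (ψ t + 2 * t * deriv ψ t) = 0) ∧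
    (∀ t, 0 ≤ ψ t ^ 3 * (ψ t + 2 * t * deriv ψ t)) ∧
    (∃ t, 0 < t ∧ 0 < ψ t ^ 3 * (ψ t + 2 * t * deriv ψ t)) := by
  let σ : ℝ → ℝ := fun t => Real.smoothTransition (2 * t - 1)
  have hσ : ContDiff ℝ 1 σ := Real.smoothTransition.contDiff.comp (by fun_prop)
  let ψ : ℝ → ℝ := fun t => (Real.sqrt t)⁻¹ * σ t
  have hψ0 : ∀ t ≤ 1/2, ψ t = 0 := by
    intro t ht
    have : σ t = 0 := Real.smoothTransition.zero_of_nonpos (by linarith)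
    simp [ψ, this]
  have hψ : ContDiff ℝ 1 ψ := by
    rw [contDiff_iff_contDiffAt]
    intro t
    rcases lt_or_ge t (1/2) with h | h
    · have : ψ =ᶠ[nhds t] fun _ => 0 := by
        filter_upwards [Iio_mem_nhds h] with y hy using hψ0 y (le_of_lt hy)
      exact contDiffAt_const.congr_of_eventuallyEq this
    · have h0 : t ≠ 0 := by linarith
      have h1 : Real.sqrt t ≠ 0 := (Real.sqrt_pos.2 (by linarith)).ne'
      exact ((Real.contDiffAt_sqrt h0).inv h1).mul hσ.contDiffAt
  have hd : ∀ t, HasDerivAt ψ (deriv ψ t) t := fun t =>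
    ((hψ.differentiable (by simp)) t).hasDerivAt
  let τ : ℝ → ℝ := fun t => t * ψ t ^ 2
  have hτd : ∀ t, HasDerivAt τ (ψ t * (ψ t + 2 * t * deriv ψ t)) t := by
    intro t
    have := (hasDerivAt_id t).mul ((hd t).pow 2)
    refine this.congr_deriv ?_
    simp only [id, Pi.pow_apply]; push_cast; ring
  have hτ : ∀ t, τ t = σ t ^ 2 := by
    intro t
    rcases le_or_gt t (1/2) with h | h
    · have : σ t = 0 := Real.smoothTransition.zero_of_nonpos (by linarith)
      simp [τ, hψ0 t h, this]
    · simp only [τ, ψ]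
      have := Real.sqrt_pos.2 (show 0 < t by linarith)
      rw [mul_pow, inv_pow, Real.sq_sqrt (by linarith)]
      field_simp
  have hmono : Monotone τ := by
    intro a b hab
    rw [hτ, hτ]
    exact pow_le_pow_left₀ (Real.smoothTransition.nonneg _)
      (Real.smoothTransition.monotone (by linarith)) 2
  have hw : ∀ t, ψ t ^ 3 * (ψ t + 2 * t * deriv ψ t) = ψ t ^ 2 * deriv τ t := by
    intro t; rw [(hτd t).deriv]; ring
  refine ⟨ψ, hψ, ?_, ?_, ?_⟩
  · intro t ht
    rw [hw]
    have : τ =ᶠ[nhds t] fun _ => 1 := by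
      filter_upwards [Ioi_mem_nhds ht] with y hy
      rw [hτ, show σ y = 1 from Real.smoothTransition.one_of_one_le (by
        simp only [Set.mem_Ioi] at hy; linarith)]
      norm_num
    rw [this.deriv_eq]; simp
  · intro t
    rw [hw]
    exact mul_nonneg (sq_nonneg _) hmono.deriv_nonneg
  · obtain ⟨c, hc, hc'⟩ := exists_deriv_eq_slope τ (show (1/2:ℝ) < 1 by norm_num)
      (fun x _ => (hτd x).continuousAt.continuousWithinAt)
      (fun x _ => (hτd x).differentiableAt.differentiableWithinAt)
    refine ⟨c, by linarith [hc.1], ?_⟩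
    rw [hw, hc', hτ, hτ, show σ 1 = 1 from Real.smoothTransition.one_of_one_le (by norm_num),
      show σ (1/2) = 0 from Real.smoothTransition.zero_of_nonpos (by norm_num)]
    have : 0 < ψ c := mul_pos (inv_pos.2 (Real.sqrt_pos.2 (by linarith [hc.1])))
      (Real.smoothTransition.pos_of_pos (by linarith [hc.1]))
    have := pow_pos this 2
    norm_num
    exact this

/-- quaternion from components -/
def en_mk (a b c d : ℝ) : ℍ := ⟨a, b, c, d⟩
@[simp] lemma en_mk_re (a b c d : ℝ) : (en_mk a b c d).re = a := rfl
@[simp] lemma en_mk_imI (a b c d : ℝ) : (en_mk a b c d).imI = b := rfl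
@[simp] lemma en_mk_imJ (a b c d : ℝ) : (en_mk a b c d).imJ = c := rfl
@[simp] lemma en_mk_imK (a b c d : ℝ) : (en_mk a b c d).imK = d := rfl

lemma en_det4 (T : ℍ →L[ℝ] ℍ) (α B β κ p q r : ℝ)
    (hT : ∀ v : ℍ, T v = en_mk (α * v.re - β * (p * v.imI + q * v.imJ + r * v.imK))
      (β * p * v.re + B * v.imI + κ * p * (p * v.imI + q * v.imJ + r * v.imK))
      (β * q * v.re + B * v.imJ + κ * q * (p * v.imI + q * v.imJ + r * v.imK))
      (β * r * v.re + B * v.imK + κ * r * (p * v.imI + q * v.imJ + r * v.imK))) :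
    T.det = B ^ 2 * (α * (B + κ * (p^2+q^2+r^2)) + β ^ 2 * (p^2+q^2+r^2)) := by
  let bb : Module.Basis (Fin 4) ℝ ℍ := QuaternionAlgebra.basisOneIJK (-1:ℝ) 0 (-1)
  have hbb : ∀ x : ℍ, ⇑(bb.repr x) = ![x.re, x.imI, x.imJ, x.imK] := fun x => rfl
  have hc : ∀ j i, ![(bb j).re, (bb j).imI, (bb j).imJ, (bb j).imK] i = if j = i then 1 else 0 := by
    intro j i
    rw [← hbb, bb.repr_self, Finsupp.single_apply]
  have h0 : ∀ j, (bb j).re = if j = 0 then 1 else 0 := fun j => hc j 0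
  have h1 : ∀ j, (bb j).imI = if j = 1 then 1 else 0 := fun j => hc j 1
  have h2 : ∀ j, (bb j).imJ = if j = 2 then 1 else 0 := fun j => hc j 2
  have h3 : ∀ j, (bb j).imK = if j = 3 then 1 else 0 := fun j => hc j 3
  have hm : LinearMap.toMatrix bb bb (T : ℍ →ₗ[ℝ] ℍ) =
      !![α, -(β*p), -(β*q), -(β*r);
         β*p, B + κ*p*p, κ*p*q, κ*p*r;
         β*q, κ*q*p, B + κ*q*q, κ*q*r;
         β*r, κ*r*p, κ*r*q, B + κ*r*r] := by
    ext i j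
    rw [LinearMap.toMatrix_apply, hbb, ContinuousLinearMap.coe_coe, hT]
    fin_cases j <;> fin_cases i <;> simp [h0, h1, h2, h3]
  rw [ContinuousLinearMap.det, ← LinearMap.det_toMatrix bb, hm]
  simp [Matrix.det_succ_row_zero, Fin.sum_univ_succ, Fin.succAbove]
  ring

/-- derivative of the power map -/
lemma en_pow (x : ℍ) (n : ℕ) : ∃ T : ℍ →L[ℝ] ℍ, ∃ A α B β κ : ℝ,
    HasFDerivAt (fun y : ℍ => y ^ n) T x ∧
    x ^ n = en_mk A (B * x.imI) (B * x.imJ) (B * x.imK) ∧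
    α = B + κ * (x.imI^2 + x.imJ^2 + x.imK^2) ∧
    (∀ v : ℍ, T v = en_mk (α * v.re - β * (x.imI * v.imI + x.imJ * v.imJ + x.imK * v.imK))
      (β * x.imI * v.re + B * v.imI + κ * x.imI * (x.imI * v.imI + x.imJ * v.imJ + x.imK * v.imK))
      (β * x.imJ * v.re + B * v.imJ + κ * x.imJ * (x.imI * v.imI + x.imJ * v.imJ + x.imK * v.imK))
      (β * x.imK * v.re + B * v.imK + κ * x.imK * (x.imI * v.imI + x.imJ * v.imJ + x.imK * v.imK))) ∧
    (0 < x.re → x.imI = 0 → x.imJ = 0 → x.imK = 0 → 0 < A ∧ 0 ≤ B ∧ (1 ≤ n → 0 < B)) := by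
  induction n with
  | zero =>
    refine ⟨0, 1, 0, 0, 0, 0, ?_, ?_, by simp, ?_, by simp⟩
    · simpa using hasFDerivAt_const (1:ℍ) x
    · ext <;> simp
    · intro v; ext <;> simp
  | succ n ih =>
    obtain ⟨T, A, α, B, β, κ, hT, hx, hα, hv, hpos⟩ := ih
    have hd := (hasFDerivAt_id (𝕜 := ℝ) x).mul' hT
    refine ⟨x • T + MulOpposite.op (x ^ n) • ContinuousLinearMap.id ℝ ℍ, x.re * A - B * (x.imI^2 + x.imJ^2 + x.imK^2),
      x.re * α - β * (x.imI^2 + x.imJ^2 + x.imK^2) + A, x.re * B + A,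
      x.re * β + α + B, x.re * κ - β, ?_, ?_, ?_, ?_, ?_⟩
    · refine hd.congr_of_eventuallyEq (Filter.Eventually.of_forall fun y => ?_)
      simp [pow_succ']
    · rw [pow_succ', hx]
      ext <;> simp <;> ring
    · rw [hα]; ring
    · intro v
      have e : (x • T + MulOpposite.op (x ^ n) • ContinuousLinearMap.id ℝ ℍ) v
          = x * T v + v * x ^ n := rfl
      rw [e, hv, hx, hα]
      ext <;> simp <;> ring
    · intro h0 h1 h2 h3
      obtain ⟨hA, hB, -⟩ := hpos h0 h1 h2 h3
      have := mul_pos h0 hA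
      have := mul_nonneg h0.le hB
      refine ⟨by rw [h1, h2, h3]; simpa using mul_pos h0 hA, by linarith, fun _ => by linarith⟩

lemma en_det4' (T : ℍ →L[ℝ] ℍ) (ψ κ : ℝ) (y : ℍ)
    (hT : ∀ v : ℍ, T v = ψ • v +
      (κ * (y.re * v.re + y.imI * v.imI + y.imJ * v.imJ + y.imK * v.imK)) • y) :
    T.det = ψ ^ 3 * (ψ + κ * (y.re ^ 2 + y.imI ^ 2 + y.imJ ^ 2 + y.imK ^ 2)) := by
  let bb : Module.Basis (Fin 4) ℝ ℍ := QuaternionAlgebra.basisOneIJK (-1:ℝ) 0 (-1)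
  have hbb : ∀ x : ℍ, ⇑(bb.repr x) = ![x.re, x.imI, x.imJ, x.imK] := fun x => rfl
  have hc : ∀ j i, ![(bb j).re, (bb j).imI, (bb j).imJ, (bb j).imK] i = if j = i then 1 else 0 := by
    intro j i
    rw [← hbb, bb.repr_self, Finsupp.single_apply]
  have h0 : ∀ j, (bb j).re = if j = 0 then 1 else 0 := fun j => hc j 0
  have h1 : ∀ j, (bb j).imI = if j = 1 then 1 else 0 := fun j => hc j 1
  have h2 : ∀ j, (bb j).imJ = if j = 2 then 1 else 0 := fun j => hc j 2
  have h3 : ∀ j, (bb j).imK = if j = 3 then 1 else 0 := fun j => hc j 3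
  have hm : LinearMap.toMatrix bb bb (T : ℍ →ₗ[ℝ] ℍ) =
      !![ψ + κ*y.re*y.re, κ*y.imI*y.re, κ*y.imJ*y.re, κ*y.imK*y.re;
         κ*y.re*y.imI, ψ + κ*y.imI*y.imI, κ*y.imJ*y.imI, κ*y.imK*y.imI;
         κ*y.re*y.imJ, κ*y.imI*y.imJ, ψ + κ*y.imJ*y.imJ, κ*y.imK*y.imJ;
         κ*y.re*y.imK, κ*y.imI*y.imK, κ*y.imJ*y.imK, ψ + κ*y.imK*y.imK] := by
    ext i j
    rw [LinearMap.toMatrix_apply, hbb, ContinuousLinearMap.coe_coe, hT]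
    fin_cases j <;> fin_cases i <;> simp [h0, h1, h2, h3]
  rw [ContinuousLinearMap.det, ← LinearMap.det_toMatrix bb, hm]
  simp [Matrix.det_succ_row_zero, Fin.sum_univ_succ, Fin.succAbove]
  ring

end

section

section Degree
open MeasureTheory Set Metric

/-- weight -/
noncomputable def en_w (ψ : ℝ → ℝ) (t : ℝ) : ℝ := ψ t ^ 3 * (ψ t + 2 * t * deriv ψ t)

/-- radial map -/
noncomputable def en_N (ψ : ℝ → ℝ) (y : ℍ) : ℍ := ψ (‖y‖ ^ 2) • y

lemma en_N_contDiff (ψ : ℝ → ℝ) (hψ : ContDiff ℝ 1 ψ) : ContDiff ℝ 1 (en_N ψ) :=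
  (hψ.comp (contDiff_norm_sq ℝ)).smul contDiff_id

lemma en_N_det (ψ : ℝ → ℝ) (hψ : ContDiff ℝ 1 ψ) (y : ℍ) :
    (fderiv ℝ (en_N ψ) y).det = en_w ψ (‖y‖ ^ 2) := by
  have h1 := (hasStrictFDerivAt_norm_sq (F := ℍ) y).hasFDerivAt
  have h2 := ((hψ.differentiable (by simp)) (‖y‖ ^ 2)).hasDerivAt
  have h3 := (h2.comp_hasFDerivAt y h1).smul (hasFDerivAt_id y)
  have h4 : HasFDerivAt (en_N ψ) _ y := h3
  have hn : ‖y‖ ^ 2 = y.re ^ 2 + y.imI ^ 2 + y.imJ ^ 2 + y.imK ^ 2 := by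
    rw [sq, ← Quaternion.normSq_eq_norm_mul_self, Quaternion.normSq_def']
  rw [h4.fderiv, en_det4' _ (ψ (‖y‖ ^ 2)) (2 * deriv ψ (‖y‖ ^ 2)) y, en_w, ← hn]
  · ring
  · intro v
    have : inner ℝ y v = y.re * v.re + y.imI * v.imI + y.imJ * v.imJ + y.imK * v.imK := by
      rw [Quaternion.inner_def]; simp
    rw [← this]
    simp
    congr 1
    ring

lemma en_comp (ψ : ℝ → ℝ) (hψ : ContDiff ℝ 1 ψ) (F : ℍ → ℍ) (hF : ContDiff ℝ 1 F) (x : ℍ) :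
    (fderiv ℝ (fun x => en_N ψ (F x)) x).det = en_w ψ (‖F x‖ ^ 2) * (fderiv ℝ F x).det := by
  have h1 := ((en_N_contDiff ψ hψ).differentiable (by simp) (F x)).hasFDerivAt
  have h2 := (hF.differentiable (by simp) x).hasFDerivAt
  have h3 : HasFDerivAt (fun x => en_N ψ (F x)) _ x := h1.comp x h2
  rw [h3.fderiv, ← en_N_det ψ hψ, ContinuousLinearMap.det, ContinuousLinearMap.det,
    ContinuousLinearMap.det, ← LinearMap.det_comp]
  rfl

variable [MeasurableSpace ℍ] [BorelSpace ℍ] (μ : Measure ℍ) [μ.IsAddHaarMeasure]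

/-- degree (unnormalised) -/
noncomputable def en_D (ψ : ℝ → ℝ) (F : ℍ → ℍ) : ℝ :=
  ∫ x, en_w ψ (‖F x‖ ^ 2) * (fderiv ℝ F x).det ∂μ

lemma en_hom (ψ : ℝ → ℝ) (hψ : ContDiff ℝ 1 ψ) (hw : ∀ t, 1 < t → en_w ψ t = 0)
    (F G : ℍ → ℍ) (hF : ContDiff ℝ 1 F) (hG : ContDiff ℝ 1 G) (R : ℝ) (hR : 0 < R)
    (h : ∀ x, R ≤ ‖x‖ → ∀ s : ℝ, 0 ≤ s → s ≤ 1 → 1 < ‖F x + s • (G x - F x)‖) :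
    en_D μ ψ F = en_D μ ψ G := by
  let χ : ContDiffBump (0 : ℍ) := ⟨R + 1, R + 2, by linarith, by linarith⟩
  have hχ : ContDiff ℝ 1 χ := χ.contDiff
  let K : ℍ → ℍ := fun x => F x + (1 - χ x) • (G x - F x)
  have hK : ContDiff ℝ 1 K := hF.add ((contDiff_const.sub hχ).smul (hG.sub hF))
  have w0 : ∀ z : ℍ, 1 < ‖z‖ → en_w ψ (‖z‖ ^ 2) = 0 := fun z hz =>
    hw _ (one_lt_pow₀ hz (by norm_num))
  have wF : ∀ x, R ≤ ‖x‖ → en_w ψ (‖F x‖ ^ 2) = 0 := fun x hx =>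
    w0 _ (by simpa using h x hx 0 le_rfl zero_le_one)
  have wG : ∀ x, R ≤ ‖x‖ → en_w ψ (‖G x‖ ^ 2) = 0 := fun x hx =>
    w0 _ (by simpa using h x hx 1 zero_le_one le_rfl)
  have wK : ∀ x, R ≤ ‖x‖ → en_w ψ (‖K x‖ ^ 2) = 0 := fun x hx =>
    w0 _ (h x hx _ (by linarith [χ.le_one (x := x)]) (by linarith [χ.nonneg (x := x)]))
  have e1 : en_D μ ψ F = en_D μ ψ K := by
    unfold en_D
    congr 1
    ext x
    rcases lt_or_ge ‖x‖ (R + 1) with hx | hx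
    · have : K =ᶠ[nhds x] F := by
        filter_upwards [isOpen_ball.mem_nhds (show x ∈ ball (0:ℍ) (R+1) by simpa using hx)] with y hy
        simp [K, χ.one_of_mem_closedBall (ball_subset_closedBall hy)]
      rw [this.fderiv_eq, this.eq_of_nhds]
    · rw [wF x (by linarith), wK x (by linarith)]; simp
  have e2 : ∀ H : ℍ → ℍ, ContDiff ℝ 1 H → (∀ x, R ≤ ‖x‖ → en_w ψ (‖H x‖ ^ 2) = 0) →
      en_D μ ψ H = ∫ x in closedBall 0 (R + 2), (fderiv ℝ (fun x => en_N ψ (H x)) x).det ∂μ := by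
    intro H hH hw'
    unfold en_D
    simp_rw [en_comp ψ hψ H hH]
    symm
    apply setIntegral_eq_integral_of_forall_compl_eq_zero
    intro x hx
    simp only [mem_closedBall, dist_zero_right, not_le] at hx
    rw [hw' x (by linarith), zero_mul]
  rw [e1, e2 K hK wK, e2 G hG wG]
  apply en_null μ _ _ ((en_N_contDiff ψ hψ).comp hK) ((en_N_contDiff ψ hψ).comp hG) _ (by linarith)
  intro x hx
  have : χ x = 0 := χ.zero_of_le_dist (by simpa using hx.le)
  simp [K, this]

lemma en_hom' (ψ : ℝ → ℝ) (hψ : ContDiff ℝ 1 ψ) (hw : ∀ t, 1 < t → en_w ψ t = 0)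
    (F G : ℍ → ℍ) (hF : ContDiff ℝ 1 F) (hG : ContDiff ℝ 1 G) (R C : ℝ) (hC : 0 < C)
    (n : ℕ) (hn : 1 ≤ n)
    (h : ∀ x, R ≤ ‖x‖ → ∀ s : ℝ, 0 ≤ s → s ≤ 1 → C * ‖x‖ ^ n ≤ ‖F x + s • (G x - F x)‖) :
    en_D μ ψ F = en_D μ ψ G := by
  apply en_hom μ ψ hψ hw F G hF hG (max R (max 1 (2 / C))) (by positivity)
  intro x hx s h0 h1
  simp only [max_le_iff] at hx
  obtain ⟨hx1, hx2, hx3⟩ := hx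
  refine lt_of_lt_of_le ?_ (h x hx1 s h0 h1)
  have : ‖x‖ ≤ ‖x‖ ^ n := le_self_pow₀ hx2 (by omega)
  rw [div_le_iff₀ hC] at hx3
  nlinarith

lemma en_D_pow_pos (ψ : ℝ → ℝ) (hψ : ContDiff ℝ 1 ψ) (hw : ∀ t, 1 < t → en_w ψ t = 0)
    (hw0 : ∀ t, 0 ≤ en_w ψ t) (hw1 : ∃ t, 0 < t ∧ 0 < en_w ψ t) (n : ℕ) (hn : 1 ≤ n) :
    0 < en_D μ ψ (fun x => x ^ n) := by
  have hcw : Continuous (en_w ψ) := by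
    unfold en_w
    have := hψ.continuous
    have := hψ.continuous_deriv (by simp)
    fun_prop
  have hp : ContDiff ℝ 1 (fun x : ℍ => x ^ n) := contDiff_id.pow n
  have hdet : ∀ x : ℍ, 0 ≤ (fderiv ℝ (fun x : ℍ => x ^ n) x).det := by
    intro x
    obtain ⟨T, A, α, B, β, κ, hT, hx, hα, hv, hpos⟩ := en_pow x n
    rw [hT.fderiv, en_det4 T α B β κ _ _ _ hv, ← hα]
    have := mul_self_nonneg α
    positivity
  obtain ⟨t, ht, hwt⟩ := hw1
  let r : ℝ := (Real.sqrt t) ^ ((n : ℝ)⁻¹)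
  have hr : 0 < r := Real.rpow_pos_of_pos (Real.sqrt_pos.2 ht) _
  have hrn : r ^ n = Real.sqrt t := Real.rpow_inv_natCast_pow (Real.sqrt_nonneg _) (by omega)
  unfold en_D
  refine Continuous.integral_pos_of_hasCompactSupport_nonneg_nonzero (x := (r : ℍ)) ?_ ?_ ?_ ?_
  · apply Continuous.mul
    · exact hcw.comp (by fun_prop)
    · exact ContinuousLinearMap.continuous_det.comp (hp.continuous_fderiv (by simp))
  · apply HasCompactSupport.intro (isCompact_closedBall (0:ℍ) 1)
    intro x hx
    simp only [mem_closedBall, dist_zero_right, not_le] at hx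
    rw [hw, zero_mul]
    rw [norm_pow, ← pow_mul]
    exact one_lt_pow₀ hx (by omega)
  · intro x
    exact mul_nonneg (hw0 _) (hdet x)
  · apply ne_of_gt
    apply mul_pos
    · rw [norm_pow, Quaternion.norm_coe, Real.norm_of_nonneg hr.le, hrn, Real.sq_sqrt ht.le]
      exact hwt
    · obtain ⟨T, A, α, B, β, κ, hT, hx, hα, hv, hpos⟩ := en_pow (r : ℍ) n
      rw [hT.fderiv, en_det4 T α B β κ _ _ _ hv, ← hα]
      have hB := (hpos (by simpa using hr) (by simp) (by simp) (by simp)).2.2 hn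
      have : α = B := by simpa using hα
      rw [this]
      simp
      positivity

end Degree

end

section

/-- monomials over any multiplicative structure -/
def en_mon {A : Type*} [Mul A] : (t : ℕ) → (Fin (t + 1) → A) → A → A
  | 0, b, _ => b 0
  | t + 1, b, x => b 0 * x * en_mon t (fun i => b i.succ) x

lemma en_mon_contDiff (t : ℕ) (b : Fin (t + 1) → ℍ) : ContDiff ℝ 1 (en_mon t b) := by
  induction t with
  | zero => exact contDiff_const
  | succ t ih => exact (contDiff_const.mul contDiff_id).mul (ih fun i => b i.succ)

lemma en_mon_norm (t : ℕ) (b : Fin (t + 1) → ℍ) (x : ℍ) :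
    ‖en_mon t b x‖ = (∏ i, ‖b i‖) * ‖x‖ ^ t := by
  induction t with
  | zero => simp [en_mon]
  | succ t ih =>
    rw [en_mon, norm_mul, norm_mul, ih, Fin.prod_univ_succ (n := t + 1), pow_succ]
    ring

lemma en_mon_one (t : ℕ) (x : ℍ) : en_mon t (fun _ => (1 : ℍ)) x = x ^ t := by
  induction t with
  | zero => simp [en_mon]
  | succ t ih => rw [en_mon, ih, one_mul, pow_succ']

lemma en_update_succ {A : Type*} {t : ℕ} (b : Fin (t + 1 + 1) → A) (k : Fin (t + 1)) (c : A) :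
    (fun j : Fin (t + 1) => Function.update b k.succ c j.succ)
      = Function.update (fun j => b j.succ) k c := by
  funext j
  simp [Function.update_apply]

lemma en_update_zero {A : Type*} {t : ℕ} (b : Fin (t + 1 + 1) → A) (c : A) :
    (fun j : Fin (t + 1) => Function.update b 0 c j.succ) = (fun j => b j.succ) := by
  funext j
  simp [Function.update_apply]

lemma en_mon_affine (t : ℕ) (b : Fin (t + 1) → ℍ) (i : Fin (t + 1)) (c d x : ℍ) (s : ℝ) :
    en_mon t (Function.update b i (c + s • (d - c))) x
      = en_mon t (Function.update b i c) x
        + s • (en_mon t (Function.update b i d) x - en_mon t (Function.update b i c) x) := by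
  induction t with
  | zero =>
    have : i = 0 := Fin.ext (by have := i.2; simp only [Fin.val_zero]; omega)
    subst this
    simp [en_mon]
  | succ t ih =>
    refine Fin.cases ?_ (fun k => ?_) i
    · simp only [en_mon, en_update_zero, Function.update_self]
      rw [add_mul, add_mul, smul_mul_assoc, smul_mul_assoc, sub_mul, sub_mul]
    · have h0 : ∀ c, Function.update b k.succ c 0 = b 0 := fun c =>
        Function.update_of_ne (Fin.succ_ne_zero k).symm _ _
      simp only [en_mon, en_update_succ, h0]
      rw [ih, mul_add, mul_smul_comm, mul_sub]

open MeasureTheory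

section
variable [MeasurableSpace ℍ] [BorelSpace ℍ] (μ : Measure ℍ) [μ.IsAddHaarMeasure]

lemma en_step (ψ : ℝ → ℝ) (hψ : ContDiff ℝ 1 ψ) (hw : ∀ t, 1 < t → en_w ψ t = 0)
    (n : ℕ) (hn : 1 ≤ n) (b : Fin (n + 1) → ℍ) (hb : ∀ i, b i ≠ 0) (i : Fin (n + 1)) (c d : ℍ)
    (hcd : ∀ s : ℝ, 0 ≤ s → s ≤ 1 → c + s • (d - c) ≠ 0) :
    en_D μ ψ (en_mon n (Function.update b i c)) = en_D μ ψ (en_mon n (Function.update b i d)) := by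
  have hcont : ContinuousOn (fun s : ℝ => ‖c + s • (d - c)‖) (Set.Icc 0 1) := by fun_prop
  obtain ⟨s0, hs0, hmin⟩ := isCompact_Icc.exists_isMinOn ⟨0, by simp⟩ hcont
  have hδ : 0 < ‖c + s0 • (d - c)‖ := norm_pos_iff.2 (hcd s0 hs0.1 hs0.2)
  have hP : 0 < ∏ j ∈ Finset.univ \ {i}, ‖b j‖ := Finset.prod_pos fun j _ => norm_pos_iff.2 (hb j)
  refine en_hom' μ ψ hψ hw _ _ (en_mon_contDiff _ _) (en_mon_contDiff _ _) 0
    (‖c + s0 • (d - c)‖ * ∏ j ∈ Finset.univ \ {i}, ‖b j‖) (mul_pos hδ hP) n hn ?_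
  intro x _ s h0 h1
  rw [← en_mon_affine, en_mon_norm]
  have e : ∀ j, ‖Function.update b i (c + s • (d - c)) j‖
      = Function.update (fun j => ‖b j‖) i ‖c + s • (d - c)‖ j := fun j =>
    Function.apply_update (fun _ y => ‖y‖) b i _ j
  simp only [e]
  rw [Finset.prod_update_of_mem (Finset.mem_univ i)]
  have := hmin (show s ∈ Set.Icc (0:ℝ) 1 from ⟨h0, h1⟩)
  simp only [Set.mem_ofPred_eq] at this
  gcongr

lemma en_step1 (ψ : ℝ → ℝ) (hψ : ContDiff ℝ 1 ψ) (hw : ∀ t, 1 < t → en_w ψ t = 0)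
    (n : ℕ) (hn : 1 ≤ n) (b : Fin (n + 1) → ℍ) (hb : ∀ i, b i ≠ 0) (i : Fin (n + 1)) :
    en_D μ ψ (en_mon n b) = en_D μ ψ (en_mon n (Function.update b i 1)) := by
  obtain ⟨ε, hε, hε2⟩ : ∃ ε : ℝ, ε * ε = 1 ∧ 0 ≤ ε * (b i).imI := by
    rcases le_total 0 (b i).imI with h | h
    · exact ⟨1, by norm_num, by linarith⟩
    · exact ⟨-1, by norm_num, by linarith⟩
  have k1 := en_step μ ψ hψ hw n hn b hb i (b i) (en_mk 0 ε 0 0) (by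
    intro s h0 h1 h
    have hI := congrArg (fun q : ℍ => q.imI) h
    simp at hI
    have h2 : ε * ((b i).imI + s * (ε - (b i).imI)) = 0 := by rw [hI, mul_zero]
    have h3 : (1 - s) * (ε * (b i).imI) + s = 0 := by
      linear_combination h2 - s * hε
    have h4 : s = 0 := le_antisymm (by nlinarith [mul_nonneg (sub_nonneg.2 h1) hε2]) h0
    rw [h4] at h
    simp at h
    exact hb i h)
  have k2 := en_step μ ψ hψ hw n hn b hb i (en_mk 0 ε 0 0) 1 (by
    intro s h0 h1 h
    have hI := congrArg (fun q : ℍ => q.imI) h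
    have hR := congrArg (fun q : ℍ => q.re) h
    simp at hI hR
    rw [hR] at hI
    simp at hI
    rw [hI] at hε
    norm_num at hε)
  rw [Function.update_eq_self] at k1
  rw [k1, k2]

lemma en_mon_D (ψ : ℝ → ℝ) (hψ : ContDiff ℝ 1 ψ) (hw : ∀ t, 1 < t → en_w ψ t = 0)
    (n : ℕ) (hn : 1 ≤ n) (a : Fin (n + 1) → ℍ) (ha : ∀ i, a i ≠ 0) :
    en_D μ ψ (en_mon n a) = en_D μ ψ (fun x => x ^ n) := by
  classical
  have key : ∀ S : Finset (Fin (n + 1)),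
      en_D μ ψ (en_mon n a) = en_D μ ψ (en_mon n (fun i => if i ∈ S then 1 else a i)) := by
    intro S
    induction S using Finset.induction_on with
    | empty => simp
    | insert i S hi ih =>
      rw [ih, en_step1 μ ψ hψ hw n hn _ _ i]
      · congr 2
        funext j
        by_cases h : j = i
        · subst h; simp
        · simp [Function.update_apply, h]
      · intro j
        split_ifs
        · exact one_ne_zero
        · exact ha j
  rw [key Finset.univ]
  congr 1
  funext x
  simp [en_mon_one]

end

lemma en_root (n : ℕ) (hn : 1 ≤ n) (a : Fin (n + 1) → ℍ) (ha : ∀ i, a i ≠ 0)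
    (m : ℕ) (t : Fin m → ℕ) (ht : ∀ j, t j < n) (b : (j : Fin m) → Fin (t j + 1) → ℍ) :
    ∃ x : ℍ, en_mon n a x + ∑ j, en_mon (t j) (b j) x = 0 := by
  let : MeasurableSpace ℍ := borel ℍ
  have : BorelSpace ℍ := ⟨rfl⟩
  let μ : Measure ℍ := Measure.addHaar
  by_contra! hno
  obtain ⟨ψ, hψ, hw, hw0, hw1⟩ := en_psi
  have hpos := en_D_pow_pos μ ψ hψ hw hw0 hw1 n hn
  rw [← en_mon_D μ ψ hψ hw n hn a ha] at hpos
  set φ : ℍ → ℍ := fun x => ∑ j, en_mon (t j) (b j) x with hφdef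
  have hφ : ContDiff ℝ 1 φ := ContDiff.sum fun j _ => en_mon_contDiff _ _
  set P := ∏ i, ‖a i‖ with hPdef
  have hP : 0 < P := Finset.prod_pos fun i _ => norm_pos_iff.2 (ha i)
  set K := ∑ j, ∏ i, ‖b j i‖ with hKdef
  have hK : 0 ≤ K := Finset.sum_nonneg fun j _ => Finset.prod_nonneg fun i _ => norm_nonneg _
  have hφK : ∀ x : ℍ, 1 ≤ ‖x‖ → ‖φ x‖ ≤ K * ‖x‖ ^ (n - 1) := by
    intro x hx
    refine (norm_sum_le _ _).trans ?_
    rw [hKdef, Finset.sum_mul]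
    refine Finset.sum_le_sum fun j _ => ?_
    rw [en_mon_norm]
    have := ht j
    refine mul_le_mul_of_nonneg_left (pow_le_pow_right₀ hx (by omega)) (Finset.prod_nonneg fun i _ => norm_nonneg _)
  set R := max 1 (2 * K / P) with hRdef
  have hgrow : ∀ x : ℍ, R ≤ ‖x‖ → ∀ s : ℝ, 0 ≤ s → s ≤ 1 →
      P / 2 * ‖x‖ ^ n ≤ ‖en_mon n a x + s • φ x‖ := by
    intro x hx s h0 h1
    have hx1 : 1 ≤ ‖x‖ := (le_max_left _ _).trans hx
    have hx2 : 2 * K / P ≤ ‖x‖ := (le_max_right _ _).trans hx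
    rw [div_le_iff₀ hP] at hx2
    have e1 : ‖s • φ x‖ ≤ K * ‖x‖ ^ (n - 1) := by
      rw [norm_smul, Real.norm_of_nonneg h0]
      calc s * ‖φ x‖ ≤ 1 * ‖φ x‖ := by gcongr
        _ ≤ _ := by rw [one_mul]; exact hφK x hx1
    have e2 : ‖en_mon n a x‖ - ‖s • φ x‖ ≤ ‖en_mon n a x + s • φ x‖ := by
      have := norm_sub_norm_le (en_mon n a x) (-(s • φ x))
      simpa only [norm_neg, sub_neg_eq_add] using this
    have e3 : ‖x‖ ^ n = ‖x‖ ^ (n - 1) * ‖x‖ := by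
      rw [← pow_succ]; congr 1; omega
    rw [en_mon_norm, ← hPdef] at e2
    have e4 : 0 ≤ ‖x‖ ^ (n - 1) := by positivity
    have e5 : 2 * K * ‖x‖ ^ (n - 1) ≤ (‖x‖ * P) * ‖x‖ ^ (n - 1) := by gcongr
    rw [e3] at e2 ⊢
    nlinarith
  set f : ℍ → ℍ := fun x => en_mon n a x + φ x with hfdef
  have hf : ContDiff ℝ 1 f := (en_mon_contDiff n a).add hφ
  have hDf : en_D μ ψ (en_mon n a) = en_D μ ψ f := by
    refine en_hom' μ ψ hψ hw _ _ (en_mon_contDiff n a) hf R (P / 2) (by positivity) n hn ?_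
    intro x hx s h0 h1
    have := hgrow x hx s h0 h1
    simpa only [hfdef, add_sub_cancel_left] using this
  have hfg : ∀ x, R ≤ ‖x‖ → P / 2 * ‖x‖ ^ n ≤ ‖f x‖ := by
    intro x hx
    have := hgrow x hx 1 zero_le_one le_rfl
    simpa only [one_smul] using this
  have hR1 : 1 ≤ R := le_max_left _ _
  obtain ⟨m0, hm0, hm⟩ : ∃ m0 : ℝ, 0 < m0 ∧ ∀ x, m0 ≤ ‖f x‖ := by
    have hc : IsCompact (Metric.closedBall (0 : ℍ) R) := isCompact_closedBall _ _
    obtain ⟨x0, _, hmin⟩ := hc.exists_isMinOn ⟨0, by simp; linarith⟩ hf.continuous.norm.continuousOn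
    refine ⟨min ‖f x0‖ (P / 2), lt_min (norm_pos_iff.2 (hno x0)) (by positivity), fun x => ?_⟩
    rcases le_total ‖x‖ R with h | h
    · exact (min_le_left _ _).trans (hmin (by simpa using h))
    · refine (min_le_right _ _).trans (le_trans ?_ (hfg x h))
      have : 1 ≤ ‖x‖ ^ n := one_le_pow₀ (hR1.trans h)
      nlinarith
  have hDc : en_D μ ψ f = en_D μ ψ (fun x => (1 + 2 / m0) • f x) := by
    refine en_hom' μ ψ hψ hw _ _ hf (hf.const_smul _) R (P / 2) (by positivity) n hn ?_
    intro x hx s h0 h1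
    refine (hfg x hx).trans ?_
    have e : f x + s • ((1 + 2 / m0) • f x - f x) = (1 + s * (2 / m0)) • f x := by
      module
    have e' : 0 ≤ s * (2 / m0) := by positivity
    rw [e, norm_smul, Real.norm_of_nonneg (by linarith)]
    nlinarith [norm_nonneg (f x)]
  have hz : en_D μ ψ (fun x => (1 + 2 / m0) • f x) = 0 := by
    unfold en_D
    refine integral_eq_zero_of_ae (Filter.Eventually.of_forall fun x => ?_)
    have : 1 < ‖(1 + 2 / m0) • f x‖ ^ 2 := by
      have e' : 0 < 2 / m0 := by positivity
      rw [norm_smul, Real.norm_of_nonneg (by linarith)]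
      refine one_lt_pow₀ ?_ (by norm_num)
      have h2 : (2 / m0) * m0 = 2 := by field_simp
      nlinarith [hm x]
    simp only [Pi.zero_apply]
    rw [show en_w ψ (‖(1 + 2 / m0) • f x‖ ^ 2) = 0 from hw _ this, zero_mul]
  rw [hDf, hDc, hz] at hpos
  exact lt_irrefl _ hpos

end

/-- rescaling map to the Hamilton quaternions -/
noncomputable def en_e (p q : ℝ) {c₁ c₂ : ℝ} (x : ℍ[ℝ, c₁, c₂]) : ℍ :=
  en_mk x.re (p * x.imI) (q * x.imJ) (p * q * x.imK)

lemma en_e_mul (p q : ℝ) {γ₁ γ₂ : ℝ} (hp : p * p = γ₁) (hq : q * q = γ₂)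
    (x y : ℍ[ℝ, -γ₁, -γ₂]) : en_e p q (x * y) = en_e p q x * en_e p q y := by
  subst hp hq
  ext <;> simp [en_e] <;> ring

lemma en_e_add (p q : ℝ) {c₁ c₂ : ℝ}
    (x y : ℍ[ℝ, c₁, c₂]) : en_e p q (x + y) = en_e p q x + en_e p q y := by
  ext <;> simp [en_e] <;> ring

lemma en_e_zero (p q : ℝ) {c₁ c₂ : ℝ} : en_e p q (0 : ℍ[ℝ, c₁, c₂]) = 0 := by
  ext <;> simp [en_e]

lemma en_e_inj (p q : ℝ) (hp : p ≠ 0) (hq : q ≠ 0) {c₁ c₂ : ℝ} (x : ℍ[ℝ, c₁, c₂])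
    (h : en_e p q x = 0) : x = 0 := by
  have h0 := congrArg (fun q : ℍ => q.re) h
  have h1 := congrArg (fun q : ℍ => q.imI) h
  have h2 := congrArg (fun q : ℍ => q.imJ) h
  have h3 := congrArg (fun q : ℍ => q.imK) h
  simp [en_e, hp, hq] at h0 h1 h2 h3
  ext <;> simp [h0, h1, h2, h3]

lemma en_e_surj (p q : ℝ) (hp : p ≠ 0) (hq : q ≠ 0) {c₁ c₂ : ℝ} (y : ℍ) :
    ∃ x : ℍ[ℝ, c₁, c₂], en_e p q x = y := by
  refine ⟨⟨y.re, y.imI / p, y.imJ / q, y.imK / (p * q)⟩, ?_⟩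
  ext <;> simp [en_e] <;> field_simp

lemma en_e_sum (p q : ℝ) {c₁ c₂ : ℝ} {m : ℕ} (g : Fin m → ℍ[ℝ, c₁, c₂]) :
    en_e p q (∑ j, g j) = ∑ j, en_e p q (g j) :=
  map_sum (⟨⟨en_e p q, en_e_zero p q⟩, en_e_add p q⟩ : ℍ[ℝ, c₁, c₂] →+ ℍ) g Finset.univ

lemma en_e_mon (p q : ℝ) {γ₁ γ₂ : ℝ} (hp : p * p = γ₁) (hq : q * q = γ₂)
    (t : ℕ) (b : Fin (t + 1) → ℍ[ℝ, -γ₁, -γ₂]) (x : ℍ[ℝ, -γ₁, -γ₂]) :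
    en_e p q (monval t b x) = en_mon t (fun i => en_e p q (b i)) (en_e p q x) := by
  induction t with
  | zero => rfl
  | succ t ih => rw [monval, en_mon, en_e_mul p q hp hq, en_e_mul p q hp hq, ih]

/-- In `H(γ₁,γ₂)` with `γ₁, γ₂ > 0`, every polynomial function of the form
`f(x) = a₀xa₁x⋯a_{n-1}xa_n + φ(x)`, where the `aᵢ` are nonzero and `φ` is a finite sum of
monomials `b₀xb₁x⋯b_{t-1}xb_t` of degree `t < n`, has at least one root. -/
theorem statement7 (γ₁ γ₂ : ℝ) (h₁ : 0 < γ₁) (h₂ : 0 < γ₂) (n : ℕ) (hn : 1 ≤ n)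
    (a : Fin (n + 1) → ℍ[ℝ, -γ₁, -γ₂]) (ha : ∀ i, a i ≠ 0)
    (m : ℕ) (t : Fin m → ℕ) (ht : ∀ j, t j < n)
    (b : (j : Fin m) → Fin (t j + 1) → ℍ[ℝ, -γ₁, -γ₂]) :
    ∃ x : ℍ[ℝ, -γ₁, -γ₂], monval n a x + ∑ j, monval (t j) (b j) x = 0 := by
  have hp := Real.mul_self_sqrt h₁.le
  have hq := Real.mul_self_sqrt h₂.le
  have hp0 := (Real.sqrt_pos.2 h₁).ne'
  have hq0 := (Real.sqrt_pos.2 h₂).ne'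
  obtain ⟨y, hy⟩ := en_root n hn (fun i => en_e (√γ₁) (√γ₂) (a i))
    (fun i h => ha i (en_e_inj _ _ hp0 hq0 _ h)) m t ht
    (fun j i => en_e (√γ₁) (√γ₂) (b j i))
  obtain ⟨x, rfl⟩ := en_e_surj (c₁ := -γ₁) (c₂ := -γ₂) (√γ₁) (√γ₂) hp0 hq0 y
  refine ⟨x, en_e_inj (√γ₁) (√γ₂) hp0 hq0 _ ?_⟩
  rw [en_e_add, en_e_sum, en_e_mon _ _ hp hq, ← hy]
  congr 1
  exact Finset.sum_congr rfl fun j _ => en_e_mon _ _ hp hq _ _ _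
end

section
/- For every non-real octonion a ∈ O(1,1,1), the equation xⁿ = a has exactly n roots, given by x_r = N(a)^{1/(2n)} (cos((λ+2rπ)/n) + w sin((λ+2rπ)/n)) for r = 0,1,…,n-1, where a/√N(a) = cos λ + w sin λ with w the normalized imaginary part of a. -/
open Quaternion

/-- The division octonion algebra `O(1,1,1)`, realized via the Cayley–Dickson construction
on the Hamilton quaternions: pairs `(a, b)` multiplying by `(a,b)(c,d) = (ac - d̄b, da + bc̄)`.
In this picture `f₁ = (i,0), f₂ = (j,0), f₃ = (k,0), f₄ = (0,1), f₅ = (0,i), f₆ = (0,j),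
f₇ = (0,k)`. -/
abbrev OctD : Type := ℍ[ℝ] × ℍ[ℝ]

/-- Octonion multiplication on `O(1,1,1)`. -/
noncomputable def omul (x y : OctD) : OctD :=
  (x.1 * y.1 - star y.2 * x.2, y.2 * x.1 + x.2 * star y.1)

/-- The octonion unit `1`. -/
noncomputable def oone : OctD := ((1 : ℍ[ℝ]), 0)

/-- Octonion powers `xⁿ` (well defined by power-associativity). -/
noncomputable def opow (x : OctD) : ℕ → OctD
  | 0 => oone
  | n + 1 => omul x (opow x n)

/-- The octonion norm `N(a) = Σₖ aₖ²`. -/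
noncomputable def octNormSq (x : OctD) : ℝ := Quaternion.normSq x.1 + Quaternion.normSq x.2

/-- The octonion trace `t(a) = 2a₀`. -/
noncomputable def octTrace (x : OctD) : ℝ := 2 * x.1.re

/-- The imaginary part of an octonion. -/
noncomputable def oim (x : OctD) : OctD := ((⟨0, x.1.imI, x.1.imJ, x.1.imK⟩ : ℍ[ℝ]), x.2)

noncomputable def phi15 (w : OctD) (z : ℂ) : OctD := z.re • oone + z.im • w

lemma phi15_mul (w : OctD) (h0 : w.1.re = 0) (h1 : octNormSq w = 1) (z z' : ℂ) :
    omul (phi15 w z) (phi15 w z') = phi15 w (z * z') := by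
  simp only [octNormSq, Quaternion.normSq_def'] at h1
  rw [h0] at h1
  refine Prod.ext ?_ ?_ <;> ext <;> simp [phi15, omul, oone, h0] <;>
    first
    | ring1
    | linear_combination (-z.im * z'.im) * h1

lemma phi15_pow (w : OctD) (h0 : w.1.re = 0) (h1 : octNormSq w = 1) (z : ℂ) (n : ℕ) :
    opow (phi15 w z) n = phi15 w (z ^ n) := by
  induction n with
  | zero => simp [opow, phi15]
  | succ k ih => rw [opow, ih, phi15_mul w h0 h1, pow_succ']

lemma phi15_re (w : OctD) (h0 : w.1.re = 0) (z : ℂ) : (phi15 w z).1.re = z.re := by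
  simp [phi15, oone, h0]

lemma phi15_eq {u w : OctD} (hu : u.1.re = 0) (hw : w.1.re = 0) {z z' : ℂ}
    (h : phi15 u z = phi15 w z') : z.re = z'.re ∧ z.im • u = z'.im • w := by
  have h1 : z.re = z'.re := by rw [← phi15_re u hu z, h, phi15_re w hw]
  refine ⟨h1, ?_⟩
  unfold phi15 at h
  rw [h1] at h
  exact add_left_cancel h

lemma phi15_inj (w : OctD) (h0 : w.1.re = 0) (h1 : octNormSq w = 1) :
    Function.Injective (phi15 w) := by
  intro z z' h
  obtain ⟨h2, h3⟩ := phi15_eq h0 h0 h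
  have hw : w ≠ 0 := by
    rintro rfl
    simp [octNormSq] at h1
  exact Complex.ext h2 (smul_left_injective ℝ hw h3)

lemma oct15_smul (c : ℝ) (x : OctD) : octNormSq (c • x) = c ^ 2 * octNormSq x := by
  simp [octNormSq, Quaternion.normSq_def']
  ring

lemma oct15_nonneg (x : OctD) : 0 ≤ octNormSq x :=
  add_nonneg Quaternion.normSq_nonneg Quaternion.normSq_nonneg

lemma oct15_pos {x : OctD} (hx : x ≠ 0) : 0 < octNormSq x := by
  refine lt_of_le_of_ne (oct15_nonneg x) fun h => hx ?_
  have h1 : Quaternion.normSq x.1 = 0 := by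
    have := @Quaternion.normSq_nonneg ℝ _ _ _ x.1
    have := @Quaternion.normSq_nonneg ℝ _ _ _ x.2
    unfold octNormSq at h
    linarith
  have h2 : Quaternion.normSq x.2 = 0 := by
    unfold octNormSq at h
    linarith
  exact Prod.ext (Quaternion.normSq_eq_zero.1 h1) (Quaternion.normSq_eq_zero.1 h2)

lemma oim15_re (x : OctD) : (oim x).1.re = 0 := rfl
lemma oim15_imI (x : OctD) : (oim x).1.imI = x.1.imI := rfl
lemma oim15_imJ (x : OctD) : (oim x).1.imJ = x.1.imJ := rfl
lemma oim15_imK (x : OctD) : (oim x).1.imK = x.1.imK := rfl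
lemma oim15_snd (x : OctD) : (oim x).2 = x.2 := rfl

lemma oim15_decomp (x : OctD) : x = x.1.re • oone + oim x := by
  refine Prod.ext ?_ ?_ <;> ext <;> simp [oone, oim15_re, oim15_imI, oim15_imJ, oim15_imK, oim15_snd]

lemma oct15_normalize {x : OctD} (hx : x ≠ 0) :
    octNormSq ((Real.sqrt (octNormSq x))⁻¹ • x) = 1 := by
  have h := oct15_pos hx
  rw [oct15_smul, inv_pow, Real.sq_sqrt h.le, inv_mul_cancel₀ h.ne']

lemma phi15_polar (w : OctD) (p t : ℝ) :
    p • (Real.cos t • oone + Real.sin t • w) = phi15 w (p * Complex.exp (t * Complex.I)) := by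
  simp [phi15, Complex.exp_ofReal_mul_I_re, Complex.exp_ofReal_mul_I_im, smul_smul]

lemma phi15_exists (w : OctD) (h0 : w.1.re = 0) (h1 : octNormSq w = 1) (x : OctD) :
    ∃ u z, u.1.re = 0 ∧ octNormSq u = 1 ∧ x = phi15 u z := by
  by_cases h : oim x = 0
  · refine ⟨w, ⟨x.1.re, 0⟩, h0, h1, ?_⟩
    conv_lhs => rw [oim15_decomp x, h]
    simp [phi15]
  · refine ⟨_, ⟨x.1.re, Real.sqrt (octNormSq (oim x))⟩, ?_, oct15_normalize h, ?_⟩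
    · simp [oim15_re]
    · have := Real.sqrt_pos.2 (oct15_pos h)
      conv_lhs => rw [oim15_decomp x]
      simp only [phi15]
      rw [smul_inv_smul₀ this.ne']

/-- for every non-real octonion `a ∈ O(1,1,1)`, the equation `xⁿ = a` has
exactly `n` roots, namely `x_r = N(a)^{1/(2n)} (cos((λ+2rπ)/n) + w sin((λ+2rπ)/n))`,
`r = 0, …, n-1`, where `a/√N(a) = cos λ + w sin λ` with `w` the normalized imaginary part
of `a` and `sin λ > 0`. -/
theorem statement15 (a : OctD) (hnr : ¬∃ r : ℝ, a = r • oone) (n : ℕ) (hn : 1 ≤ n)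
    (w : OctD) (hw : w = (Real.sqrt (octNormSq (oim a)))⁻¹ • oim a)
    (lam : ℝ) (hsin : 0 < Real.sin lam)
    (hdec : a = Real.sqrt (octNormSq a) • (Real.cos lam • oone + Real.sin lam • w)) :
    (∀ r : Fin n,
      opow ((octNormSq a ^ ((1 : ℝ) / (2 * n))) •
        (Real.cos ((lam + 2 * (r : ℕ) * Real.pi) / n) • oone
          + Real.sin ((lam + 2 * (r : ℕ) * Real.pi) / n) • w)) n = a) ∧
    Function.Injective (fun r : Fin n =>
      (octNormSq a ^ ((1 : ℝ) / (2 * n))) •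
        (Real.cos ((lam + 2 * (r : ℕ) * Real.pi) / n) • oone
          + Real.sin ((lam + 2 * (r : ℕ) * Real.pi) / n) • w)) ∧
    {x : OctD | opow x n = a} = Set.range (fun r : Fin n =>
      (octNormSq a ^ ((1 : ℝ) / (2 * n))) •
        (Real.cos ((lam + 2 * (r : ℕ) * Real.pi) / n) • oone
          + Real.sin ((lam + 2 * (r : ℕ) * Real.pi) / n) • w)) := by
  have him : oim a ≠ 0 := fun h => hnr ⟨a.1.re, by
    conv_lhs => rw [oim15_decomp a, h, add_zero]⟩
  have hw0 : w.1.re = 0 := by rw [hw]; simp [oim15_re]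
  have hw1 : octNormSq w = 1 := by rw [hw]; exact oct15_normalize him
  have ha0 : a ≠ 0 := fun h => hnr ⟨0, by rw [h, zero_smul]⟩
  have hN := oct15_pos ha0
  have hn0 : n ≠ 0 := by omega
  have hnC : (n : ℂ) ≠ 0 := by exact_mod_cast hn0
  have hnR : (n : ℝ) ≠ 0 := by exact_mod_cast hn0
  rw [phi15_polar] at hdec
  simp only [phi15_polar]
  set N := octNormSq a with hNdef
  set A : ℂ := (Real.sqrt N : ℂ) * Complex.exp (lam * Complex.I) with hA
  set p : ℝ := N ^ ((1 : ℝ) / (2 * n)) with hp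
  have hp0 : 0 < p := Real.rpow_pos_of_pos hN _
  have hpn : p ^ n = Real.sqrt N := by
    rw [hp, ← Real.rpow_natCast, ← Real.rpow_mul hN.le, Real.sqrt_eq_rpow]
    congr 1
    field_simp
  have hAim : A.im ≠ 0 := by
    have : A.im = Real.sqrt N * Real.sin lam := by
      rw [hA, Complex.im_ofReal_mul,
        Complex.exp_ofReal_mul_I_im]
    rw [this]
    exact (mul_pos (Real.sqrt_pos.2 hN) hsin).ne'
  set ζ : ℂ := Complex.exp (2 * Real.pi * Complex.I / n) with hζ
  have hprim : IsPrimitiveRoot ζ n := Complex.isPrimitiveRoot_exp n hn0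
  set z0 : ℂ := p * Complex.exp (lam / n * Complex.I) with hz0
  have hz0ne : z0 ≠ 0 :=
    mul_ne_zero (by exact_mod_cast hp0.ne') (Complex.exp_ne_zero _)
  have hz0n : z0 ^ n = A := by
    rw [hz0, mul_pow, ← Complex.exp_nat_mul, hA, ← hpn]
    push_cast
    congr 2
    field_simp
  have hzr : ∀ r : ℕ, (p : ℂ) * Complex.exp
      (((lam + 2 * (r : ℕ) * Real.pi) / n : ℝ) * Complex.I) = z0 * ζ ^ r := by
    intro r
    rw [hz0, hζ, ← Complex.exp_nat_mul, mul_assoc (p : ℂ), ← Complex.exp_add]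
    push_cast
    congr 2
    field_simp
  simp only [hzr]
  have hroot : ∀ r : ℕ, opow (phi15 w (z0 * ζ ^ r)) n = a := by
    intro r
    rw [phi15_pow w hw0 hw1, mul_pow, hz0n, pow_right_comm, hprim.pow_eq_one, one_pow, mul_one]
    exact hdec.symm
  refine ⟨fun r => hroot r, ?_, ?_⟩
  · intro r s h
    have h2 := mul_left_cancel₀ hz0ne (phi15_inj w hw0 hw1 h)
    exact Fin.ext (hprim.pow_inj r.2 s.2 h2)
  · ext x
    constructor
    · intro hx
      have hx : opow x n = a := hx
      obtain ⟨u, z, hu0, hu1, rfl⟩ := phi15_exists w hw0 hw1 x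
      have hx' := hx
      rw [phi15_pow u hu0 hu1, hdec] at hx'
      obtain ⟨-, h2⟩ := phi15_eq hu0 hw0 hx'
      have hzim : (z ^ n).im ≠ 0 := by
        intro h
        rw [h, zero_smul] at h2
        have h3 := congrArg octNormSq h2
        rw [oct15_smul, hw1, mul_one] at h3
        simp [octNormSq] at h3
        exact hAim (pow_eq_zero_iff (two_ne_zero)|>.1 h3.symm)
      have hu : u = ((z ^ n).im⁻¹ * A.im) • w := by
        rw [mul_smul, ← h2, inv_smul_smul₀ hzim]
      obtain ⟨y, hy⟩ : ∃ y, phi15 u z = phi15 w y :=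
        ⟨⟨z.re, z.im * ((z ^ n).im⁻¹ * A.im)⟩, by
          simp only [phi15]; rw [hu, smul_smul]⟩
      rw [hy] at hx ⊢
      rw [phi15_pow w hw0 hw1, hdec] at hx
      have hyn := phi15_inj w hw0 hw1 hx
      have : (y / z0) ^ n = 1 := by
        rw [div_pow, hyn, hz0n, div_self]
        intro h
        exact hAim (by rw [h]; rfl)
      have : NeZero n := ⟨hn0⟩
      obtain ⟨i, hi, h⟩ := hprim.eq_pow_of_pow_eq_one ‹(y / z0) ^ n = 1›
      refine ⟨⟨i, hi⟩, ?_⟩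
      simp only [h]
      rw [mul_div_cancel₀ _ hz0ne]
    · rintro ⟨r, rfl⟩
      exact hroot r
end
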